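/- Let N ≥ 1 and for each triple of indices m,n,p ∈ {0,1,…,N+1} let u_{m,n,p} : ℝ → ℝ be twice differentiable. Suppose that for all m,n,p ∈ {1,…,N} the lattice equation ü_{m,n,p} − c²·∇²u_{m,n,p} + μ·u_{m,n,p} + V′(u_{m,n,p}) − J = β·∇²u̇_{m,n,p} − γ·u̇_{m,n,p} holds for all t, and that the discrete Neumann conditions u_{N+1,n,p}(t) = u_{N,n,p}(t), u_{m,N+1,p}(t) = u_{m,N,p}(t), u_{m,n,N+1}(t) = u_{m,n,N}(t) hold for all m,n,p ∈ {1,…,N} and all t. Then the total energy E(t) is differentiable and dE/dt = −c²·∑_{i,j=1}^N [(δₓu_{0,i,j})·u̇_{0,i,j} + (δᵧu_{i,0,j})·u̇_{i,0,j} + (δ_zu_{i,j,0})·u̇_{i,j,0}] − β·{∑_{m,n,p=1}^N [(δₓu̇_{m−1,n,p})² + (δᵧu̇_{m,n−1,p})² + (δ_zu̇_{m,n,p−1})²] + ∑_{i,j=1}^N [(δₓu̇_{0,i,j})·u̇_{0,i,j} + (δᵧu̇_{i,0,j})·u̇_{i,0,j} + (δ_zu̇_{i,j,0})·u̇_{i,j,0}]}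 − γ·∑_{m,n,p=1}^N (u̇_{m,n,p})². -/

import Mathlib

/-!
The energy is the sum of the on-site energies and of `c² / 2` times a Dirichlet form over the bonds.
Along the flow the on-site part changes at the rate
`∑ (ü + μu + V'(u) − J) u̇ = ∑ (c²∇²u + β∇²u̇ − γu̇) u̇`, and both Laplacian terms are summed by
parts. In the `c²` term the bulk contribution cancels the rate of change of the Dirichlet form; in
the `β` term it is the dissipation. What remains are fluxes through the faces of the cube, and the
Neumann conditions make those through the far faces vanish.
-/

noncomputable section

open Finset

/-- Discrete Laplacian on the three-dimensional lattice. -/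
def dLap (u : ℤ → ℤ → ℤ → ℝ → ℝ) (m n p : ℤ) (t : ℝ) : ℝ :=
  u (m + 1) n p t + u (m - 1) n p t + u m (n + 1) p t + u m (n - 1) p t
    + u m n (p + 1) t + u m n (p - 1) t - 6 * u m n p t

/-- Time derivative of the node function. -/
def ud (u : ℤ → ℤ → ℤ → ℝ → ℝ) (m n p : ℤ) (t : ℝ) : ℝ := deriv (u m n p) t

/-- Hamiltonian of the lattice node at `(m,n,p)`. -/
def nodeH (c μ J : ℝ) (V : ℝ → ℝ) (u : ℤ → ℤ → ℤ → ℝ → ℝ) (m n p : ℤ) (t : ℝ) : ℝ :=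
  (1:ℝ)/2 * ((ud u m n p t) ^ 2 + c ^ 2 * (u (m + 1) n p t - u m n p t) ^ 2
      + c ^ 2 * (u m (n + 1) p t - u m n p t) ^ 2
      + c ^ 2 * (u m n (p + 1) t - u m n p t) ^ 2
      + μ * (u m n p t) ^ 2)
    + V (u m n p t) - J * u m n p t

/-- Total energy of the lattice system, including the coupling potential of the
nodes adjacent to the driving boundary. -/
def totE (N : ℕ) (c μ J : ℝ) (V : ℝ → ℝ) (u : ℤ → ℤ → ℤ → ℝ → ℝ) (t : ℝ) : ℝ :=
  (∑ m ∈ Icc (1:ℤ) (N:ℤ), ∑ n ∈ Icc (1:ℤ) (N:ℤ), ∑ p ∈ Icc (1:ℤ) (N:ℤ),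
      nodeH c μ J V u m n p t)
    + c ^ 2 / 2 *
      ((∑ n ∈ Icc (1:ℤ) (N:ℤ), ∑ p ∈ Icc (1:ℤ) (N:ℤ), (u 1 n p t - u 0 n p t) ^ 2)
        + (∑ m ∈ Icc (1:ℤ) (N:ℤ), ∑ p ∈ Icc (1:ℤ) (N:ℤ), (u m 1 p t - u m 0 p t) ^ 2)
        + (∑ m ∈ Icc (1:ℤ) (N:ℤ), ∑ n ∈ Icc (1:ℤ) (N:ℤ), (u m n 1 t - u m n 0 t) ^ 2))

/-- The `ℓ²` pairing of two lattice fields over the interior cube `{1, …, N}³`. -/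
def cubeInner (N : ℕ) (u v : ℤ → ℤ → ℤ → ℝ → ℝ) (t : ℝ) : ℝ :=
  ∑ m ∈ Icc (1 : ℤ) N, ∑ n ∈ Icc (1 : ℤ) N, ∑ p ∈ Icc (1 : ℤ) N, u m n p t * v m n p t

/-- The Dirichlet form `∑ ∇⁻u · ∇⁻v` over the interior cube. It uses backward differences, hence
the bonds to the near faces but not those to the far faces. -/
def dirichletForm (N : ℕ) (u v : ℤ → ℤ → ℤ → ℝ → ℝ) (t : ℝ) : ℝ :=
  ∑ m ∈ Icc (1 : ℤ) N, ∑ n ∈ Icc (1 : ℤ) N, ∑ p ∈ Icc (1 : ℤ) N,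
    ((u m n p t - u (m - 1) n p t) * (v m n p t - v (m - 1) n p t)
      + (u m n p t - u m (n - 1) p t) * (v m n p t - v m (n - 1) p t)
      + (u m n p t - u m n (p - 1) t) * (v m n p t - v m n (p - 1) t))

/-- The Dirichlet form over all bonds with an endpoint in the interior cube: forward differences
at the interior nodes, together with the bonds to the near faces. The coupling part of `totE` is
`c ^ 2 / 2` times its diagonal. -/
def bondForm (N : ℕ) (u v : ℤ → ℤ → ℤ → ℝ → ℝ) (t : ℝ) : ℝ :=
  (∑ m ∈ Icc (1 : ℤ) N, ∑ n ∈ Icc (1 : ℤ) N, ∑ p ∈ Icc (1 : ℤ) N,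
    ((u (m + 1) n p t - u m n p t) * (v (m + 1) n p t - v m n p t)
      + (u m (n + 1) p t - u m n p t) * (v m (n + 1) p t - v m n p t)
      + (u m n (p + 1) t - u m n p t) * (v m n (p + 1) t - v m n p t)))
  + ∑ i ∈ Icc (1 : ℤ) N, ∑ j ∈ Icc (1 : ℤ) N,
    ((u 1 i j t - u 0 i j t) * (v 1 i j t - v 0 i j t)
      + (u i 1 j t - u i 0 j t) * (v i 1 j t - v i 0 j t)
      + (u i j 1 t - u i j 0 t) * (v i j 1 t - v i j 0 t))

/-- The flux of `u` across the three bond layers between the indices `k` and `k + 1`, weighted by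
the values of `v` on the layers with index `l`. The near faces are `k = 0`, the far ones `k = N`;
at the uses `l` is `k` or `k + 1`. -/
def faceFlux (N : ℕ) (k l : ℤ) (u v : ℤ → ℤ → ℤ → ℝ → ℝ) (t : ℝ) : ℝ :=
  ∑ i ∈ Icc (1 : ℤ) N, ∑ j ∈ Icc (1 : ℤ) N,
    ((u (k + 1) i j t - u k i j t) * v l i j t
      + (u i (k + 1) j t - u i k j t) * v i l j t
      + (u i j (k + 1) t - u i j k t) * v i j l t)

/-- The part of the node Hamiltonian that does not involve neighbouring nodes, for a single
trajectory `f`. -/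
def onSiteEnergy (μ J : ℝ) (V f : ℝ → ℝ) (t : ℝ) : ℝ :=
  1 / 2 * (deriv f t ^ 2 + μ * f t ^ 2) + V (f t) - J * f t

theorem sum_Icc_int_sub_pred {G : Type*} [AddCommGroup G] {a b : ℤ} (hab : a - 1 ≤ b)
    (f : ℤ → G) : ∑ m ∈ Icc a b, (f m - f (m - 1)) = f b - f (a - 1) := by
  induction b, hab using Int.leInduction with
  | base => simp
  | succ b hb ih =>
    rw [← insert_Icc_right_eq_Icc_add_one (by omega), sum_insert (by simp), ih,
      add_sub_cancel_right, sub_add_sub_cancel]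

theorem sum_box_divergence {G : Type*} [AddCommGroup G] (L M N : ℕ) (f g h : ℤ → ℤ → ℤ → G) :
    ∑ m ∈ Icc (1 : ℤ) L, ∑ n ∈ Icc (1 : ℤ) M, ∑ p ∈ Icc (1 : ℤ) N,
        ((f m n p - f (m - 1) n p) + (g m n p - g m (n - 1) p) + (h m n p - h m n (p - 1)))
      = ∑ n ∈ Icc (1 : ℤ) M, ∑ p ∈ Icc (1 : ℤ) N, (f L n p - f 0 n p)
        + ∑ m ∈ Icc (1 : ℤ) L, ∑ p ∈ Icc (1 : ℤ) N, (g m M p - g m 0 p)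
        + ∑ m ∈ Icc (1 : ℤ) L, ∑ n ∈ Icc (1 : ℤ) M, (h m n N - h m n 0) := by
  have telescope (K : ℕ) (F : ℤ → G) : ∑ k ∈ Icc (1 : ℤ) K, (F k - F (k - 1)) = F K - F 0 :=
    sum_Icc_int_sub_pred (by omega) F
  simp only [sum_add_distrib]
  congr 1
  · congr 1
    · simpa only [sum_sub_distrib] using
        telescope L fun m ↦ ∑ n ∈ Icc (1 : ℤ) M, ∑ p ∈ Icc (1 : ℤ) N, f m n p
    · refine sum_congr rfl fun m _ ↦ ?_
      simpa only [sum_sub_distrib] using telescope M fun n ↦ ∑ p ∈ Icc (1 : ℤ) N, g m n p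
  · exact sum_congr rfl fun m _ ↦ by simp only [telescope]

section Green

variable (N : ℕ) (u v : ℤ → ℤ → ℤ → ℝ → ℝ) (t : ℝ)

/- Each summand is `∇²u · v` plus a product of differences of `u` and `v`, by the discrete product
rule: backward differences for the shift `a = 0`, forward ones for `a = 1`. -/
theorem sum_divergence_gradient_mul (a : ℤ) :
    ∑ m ∈ Icc (1 : ℤ) N, ∑ n ∈ Icc (1 : ℤ) N, ∑ p ∈ Icc (1 : ℤ) N,
        (((u (m + 1) n p t - u m n p t) * v (m + a) n p t
            - (u m n p t - u (m - 1) n p t) * v (m - 1 + a) n p t)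
          + ((u m (n + 1) p t - u m n p t) * v m (n + a) p t
            - (u m n p t - u m (n - 1) p t) * v m (n - 1 + a) p t)
          + ((u m n (p + 1) t - u m n p t) * v m n (p + a) t
            - (u m n p t - u m n (p - 1) t) * v m n (p - 1 + a) t))
      = faceFlux N N (N + a) u v t - faceFlux N 0 a u v t := by
  have hdiv := sum_box_divergence N N N
    (fun m n p ↦ (u (m + 1) n p t - u m n p t) * v (m + a) n p t)
    (fun m n p ↦ (u m (n + 1) p t - u m n p t) * v m (n + a) p t)
    (fun m n p ↦ (u m n (p + 1) t - u m n p t) * v m n (p + a) t)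
  simp only [sub_add_cancel] at hdiv
  rw [hdiv]
  simp only [faceFlux, zero_add, sum_add_distrib, sum_sub_distrib]
  ring

theorem cubeInner_dLap_add_dirichletForm :
    cubeInner N (dLap u) v t + dirichletForm N u v t
      = faceFlux N N N u v t - faceFlux N 0 0 u v t := by
  have hflux := sum_divergence_gradient_mul N u v t 0
  simp only [add_zero] at hflux
  rw [← hflux]
  simp only [cubeInner, dirichletForm, dLap, ← sum_add_distrib]
  refine sum_congr rfl fun m _ ↦ sum_congr rfl fun n _ ↦ sum_congr rfl fun p _ ↦ ?_
  ring

theorem cubeInner_dLap_add_bondForm :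
    cubeInner N (dLap u) v t + bondForm N u v t
      = faceFlux N N (N + 1) u v t - faceFlux N 0 0 u v t := by
  have hnear : ∑ i ∈ Icc (1 : ℤ) N, ∑ j ∈ Icc (1 : ℤ) N,
        ((u 1 i j t - u 0 i j t) * (v 1 i j t - v 0 i j t)
          + (u i 1 j t - u i 0 j t) * (v i 1 j t - v i 0 j t)
          + (u i j 1 t - u i j 0 t) * (v i j 1 t - v i j 0 t))
      = faceFlux N 0 1 u v t - faceFlux N 0 0 u v t := by
    simp only [faceFlux, zero_add, ← sum_sub_distrib]
    refine sum_congr rfl fun i _ ↦ sum_congr rfl fun j _ ↦ ?_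
    ring
  have hflux := sum_divergence_gradient_mul N u v t 1
  simp only [sub_add_cancel] at hflux
  rw [bondForm, hnear, ← add_assoc,
    ← sub_add_sub_cancel (faceFlux N N (N + 1) u v t) (faceFlux N 0 1 u v t), ← hflux]
  congr 1
  simp only [cubeInner, dLap, ← sum_add_distrib]
  refine sum_congr rfl fun m _ ↦ sum_congr rfl fun n _ ↦ sum_congr rfl fun p _ ↦ ?_
  ring

end Green

theorem faceFlux_eq_zero {N : ℕ} {k : ℤ} {u : ℤ → ℤ → ℤ → ℝ → ℝ} {t : ℝ}
    (hu : ∀ i ∈ Icc (1 : ℤ) N, ∀ j ∈ Icc (1 : ℤ) N, u (k + 1) i j t = u k i j t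
      ∧ u i (k + 1) j t = u i k j t ∧ u i j (k + 1) t = u i j k t)
    (l : ℤ) (v : ℤ → ℤ → ℤ → ℝ → ℝ) : faceFlux N k l u v t = 0 := by
  refine sum_eq_zero fun i hi ↦ sum_eq_zero fun j hj ↦ ?_
  obtain ⟨hx, hy, hz⟩ := hu i hi j hj
  simp [hx, hy, hz]

theorem totE_eq_onSiteEnergy_add_bondForm (N : ℕ) (c μ J : ℝ) (V : ℝ → ℝ)
    (u : ℤ → ℤ → ℤ → ℝ → ℝ) (t : ℝ) :
    totE N c μ J V u t
      = ∑ m ∈ Icc (1 : ℤ) N, ∑ n ∈ Icc (1 : ℤ) N, ∑ p ∈ Icc (1 : ℤ) N,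
          onSiteEnergy μ J V (u m n p) t
        + c ^ 2 / 2 * bondForm N u u t := by
  have hface : (∑ n ∈ Icc (1 : ℤ) N, ∑ p ∈ Icc (1 : ℤ) N, (u 1 n p t - u 0 n p t) ^ 2)
        + (∑ m ∈ Icc (1 : ℤ) N, ∑ p ∈ Icc (1 : ℤ) N, (u m 1 p t - u m 0 p t) ^ 2)
        + (∑ m ∈ Icc (1 : ℤ) N, ∑ n ∈ Icc (1 : ℤ) N, (u m n 1 t - u m n 0 t) ^ 2)
      = ∑ i ∈ Icc (1 : ℤ) N, ∑ j ∈ Icc (1 : ℤ) N, ((u 1 i j t - u 0 i j t) ^ 2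
        + (u i 1 j t - u i 0 j t) ^ 2 + (u i j 1 t - u i j 0 t) ^ 2) := by
    simp only [sum_add_distrib]
  rw [totE, bondForm, hface, mul_add, ← add_assoc]
  congr 1
  · simp only [nodeH, ud, onSiteEnergy, mul_sum, ← sum_add_distrib]
    refine sum_congr rfl fun m _ ↦ sum_congr rfl fun n _ ↦ sum_congr rfl fun p _ ↦ ?_
    ring
  · simp only [sq]

theorem hasDerivAt_onSiteEnergy {μ J : ℝ} {V f : ℝ → ℝ} {t : ℝ}
    (hV : DifferentiableAt ℝ V (f t)) (hf : DifferentiableAt ℝ f t)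
    (hf' : DifferentiableAt ℝ (deriv f) t) :
    HasDerivAt (onSiteEnergy μ J V f)
      ((deriv (deriv f) t + μ * f t + deriv V (f t) - J) * deriv f t) t := by
  have hkinetic := hf'.hasDerivAt.fun_pow 2
  have hquadratic := (hf.hasDerivAt.fun_pow 2).const_mul μ
  have hpotential := hV.hasDerivAt.comp t hf.hasDerivAt
  refine ((((hkinetic.add hquadratic).const_mul (1 / 2)).add hpotential).sub
    (hf.hasDerivAt.const_mul J)).congr_deriv ?_
  push_cast
  ring

theorem hasDerivAt_sub_mul_self {f g : ℝ → ℝ} {t : ℝ} (hf : DifferentiableAt ℝ f t)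
    (hg : DifferentiableAt ℝ g t) :
    HasDerivAt (fun s ↦ (f s - g s) * (f s - g s))
      (2 * ((f t - g t) * (deriv f t - deriv g t))) t := by
  have hsub := hf.hasDerivAt.fun_sub hg.hasDerivAt
  exact (hsub.fun_mul hsub).congr_deriv (by ring)

section Dynamics

variable {N : ℕ} {u : ℤ → ℤ → ℤ → ℝ → ℝ} {t : ℝ}

theorem hasDerivAt_bondForm
    (hu : ∀ m n p : ℤ, m ∈ Icc (0 : ℤ) (N + 1) → n ∈ Icc (0 : ℤ) (N + 1) →
      p ∈ Icc (0 : ℤ) (N + 1) → DifferentiableAt ℝ (u m n p) t) :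
    HasDerivAt (bondForm N u u) (2 * bondForm N u (ud u) t) t := by
  have hmem {i : ℤ} (hi : i ∈ Icc (1 : ℤ) N) :
      i ∈ Icc (0 : ℤ) (N + 1) ∧ i + 1 ∈ Icc (0 : ℤ) (N + 1) := by
    simp only [mem_Icc] at hi ⊢
    omega
  have h0 : (0 : ℤ) ∈ Icc (0 : ℤ) (N + 1) := by simp only [mem_Icc]; omega
  have h1 : (1 : ℤ) ∈ Icc (0 : ℤ) (N + 1) := by simp only [mem_Icc]; omega
  simp only [bondForm, mul_add, mul_sum]
  refine .fun_add (.fun_sum fun m hm ↦ .fun_sum fun n hn ↦ .fun_sum fun p hp ↦ ?_)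
    (.fun_sum fun i hi ↦ .fun_sum fun j hj ↦ ?_)
  · obtain ⟨⟨hm, hm'⟩, ⟨hn, hn'⟩, hp, hp'⟩ := And.intro (hmem hm) (And.intro (hmem hn) (hmem hp))
    have hmnp := hu m n p hm hn hp
    exact ((hasDerivAt_sub_mul_self (hu _ _ _ hm' hn hp) hmnp).fun_add
      (hasDerivAt_sub_mul_self (hu _ _ _ hm hn' hp) hmnp)).fun_add
      (hasDerivAt_sub_mul_self (hu _ _ _ hm hn hp') hmnp)
  · obtain ⟨⟨hi, -⟩, hj, -⟩ := And.intro (hmem hi) (hmem hj)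
    exact ((hasDerivAt_sub_mul_self (hu _ _ _ h1 hi hj) (hu _ _ _ h0 hi hj)).fun_add
      (hasDerivAt_sub_mul_self (hu _ _ _ hi h1 hj) (hu _ _ _ hi h0 hj))).fun_add
      (hasDerivAt_sub_mul_self (hu _ _ _ hi hj h1) (hu _ _ _ hi hj h0))

theorem hasDerivAt_totE {c μ J : ℝ} {V : ℝ → ℝ}
    (hV : ∀ m n p : ℤ, m ∈ Icc (1 : ℤ) N → n ∈ Icc (1 : ℤ) N → p ∈ Icc (1 : ℤ) N →
      DifferentiableAt ℝ V (u m n p t))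
    (hu : ∀ m n p : ℤ, m ∈ Icc (0 : ℤ) (N + 1) → n ∈ Icc (0 : ℤ) (N + 1) →
      p ∈ Icc (0 : ℤ) (N + 1) → DifferentiableAt ℝ (u m n p) t)
    (hu' : ∀ m n p : ℤ, m ∈ Icc (1 : ℤ) N → n ∈ Icc (1 : ℤ) N → p ∈ Icc (1 : ℤ) N →
      DifferentiableAt ℝ (deriv (u m n p)) t) :
    HasDerivAt (totE N c μ J V u)
      (∑ m ∈ Icc (1 : ℤ) N, ∑ n ∈ Icc (1 : ℤ) N, ∑ p ∈ Icc (1 : ℤ) N,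
          (deriv (deriv (u m n p)) t + μ * u m n p t + deriv V (u m n p t) - J)
            * deriv (u m n p) t
        + c ^ 2 * bondForm N u (ud u) t) t := by
  have hmem {i : ℤ} (hi : i ∈ Icc (1 : ℤ) N) : i ∈ Icc (0 : ℤ) (N + 1) :=
    Icc_subset_Icc zero_le_one (by omega) hi
  rw [funext (totE_eq_onSiteEnergy_add_bondForm N c μ J V u)]
  refine .fun_add (.fun_sum fun m hm ↦ .fun_sum fun n hn ↦ .fun_sum fun p hp ↦
    hasDerivAt_onSiteEnergy (hV m n p hm hn hp) (hu m n p (hmem hm) (hmem hn) (hmem hp))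
      (hu' m n p hm hn hp)) ?_
  exact ((hasDerivAt_bondForm hu).const_mul (c ^ 2 / 2)).congr_deriv (by ring)

theorem lattice_energy_rate_general {c μ J β γ : ℝ} {V : ℝ → ℝ}
    (hV : ∀ m n p : ℤ, m ∈ Icc (1 : ℤ) N → n ∈ Icc (1 : ℤ) N → p ∈ Icc (1 : ℤ) N →
      DifferentiableAt ℝ V (u m n p t))
    (hu : ∀ m n p : ℤ, m ∈ Icc (0 : ℤ) (N + 1) → n ∈ Icc (0 : ℤ) (N + 1) →
      p ∈ Icc (0 : ℤ) (N + 1) → DifferentiableAt ℝ (u m n p) t)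
    (hu' : ∀ m n p : ℤ, m ∈ Icc (1 : ℤ) N → n ∈ Icc (1 : ℤ) N → p ∈ Icc (1 : ℤ) N →
      DifferentiableAt ℝ (deriv (u m n p)) t)
    (heq : ∀ m n p : ℤ, m ∈ Icc (1 : ℤ) N → n ∈ Icc (1 : ℤ) N → p ∈ Icc (1 : ℤ) N →
      deriv (deriv (u m n p)) t - c ^ 2 * dLap u m n p t + μ * u m n p t
          + deriv V (u m n p t) - J
        = β * dLap (ud u) m n p t - γ * deriv (u m n p) t) :
    HasDerivAt (totE N c μ J V u)
      (c ^ 2 * (faceFlux N N (N + 1) u (ud u) t - faceFlux N 0 0 u (ud u) t)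
        + β * (faceFlux N N N (ud u) (ud u) t - dirichletForm N (ud u) (ud u) t
          - faceFlux N 0 0 (ud u) (ud u) t)
        - γ * cubeInner N (ud u) (ud u) t) t := by
  have hpower : ∑ m ∈ Icc (1 : ℤ) N, ∑ n ∈ Icc (1 : ℤ) N, ∑ p ∈ Icc (1 : ℤ) N,
        (deriv (deriv (u m n p)) t + μ * u m n p t + deriv V (u m n p t) - J) * deriv (u m n p) t
      = c ^ 2 * cubeInner N (dLap u) (ud u) t + β * cubeInner N (dLap (ud u)) (ud u) t
        - γ * cubeInner N (ud u) (ud u) t := by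
    simp only [cubeInner, mul_sum, ← sum_add_distrib, ← sum_sub_distrib]
    refine sum_congr rfl fun m hm ↦ sum_congr rfl fun n hn ↦ sum_congr rfl fun p hp ↦ ?_
    simp only [ud] at heq ⊢
    linear_combination deriv (u m n p) t * heq m n p hm hn hp
  have hbond := cubeInner_dLap_add_bondForm N u (ud u) t
  have hdirichlet := cubeInner_dLap_add_dirichletForm N (ud u) (ud u) t
  refine (hasDerivAt_totE hV hu hu').congr_deriv ?_
  linear_combination hpower + c ^ 2 * hbond + β * hdirichlet

end Dynamics

/-- Rate of change of the total energy of the damped lattice with discrete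
Neumann conditions on the far boundaries. -/
theorem lattice_energy_rate
    (N : ℕ) (hN : 1 ≤ N) (c μ J β γ : ℝ) (hc : 0 < c) (hβ : 0 ≤ β) (hγ : 0 ≤ γ)
    (V : ℝ → ℝ) (hV : ContDiff ℝ 1 V)
    (u : ℤ → ℤ → ℤ → ℝ → ℝ)
    (hdiff : ∀ m n p : ℤ, m ∈ Icc (0:ℤ) (N + 1) → n ∈ Icc (0:ℤ) (N + 1) →
      p ∈ Icc (0:ℤ) (N + 1) → ∀ t : ℝ,
        DifferentiableAt ℝ (u m n p) t ∧ DifferentiableAt ℝ (deriv (u m n p)) t)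
    (heq : ∀ m n p : ℤ, m ∈ Icc (1:ℤ) (N:ℤ) → n ∈ Icc (1:ℤ) (N:ℤ) →
      p ∈ Icc (1:ℤ) (N:ℤ) → ∀ t : ℝ,
        deriv (deriv (u m n p)) t - c ^ 2 * dLap u m n p t + μ * u m n p t
            + deriv V (u m n p t) - J
          = β * dLap (fun i j l s => deriv (u i j l) s) m n p t
            - γ * deriv (u m n p) t)
    (hneum : ∀ m n p : ℤ, m ∈ Icc (1:ℤ) (N:ℤ) → n ∈ Icc (1:ℤ) (N:ℤ) →
      p ∈ Icc (1:ℤ) (N:ℤ) → ∀ t : ℝ,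
        u ((N:ℤ) + 1) n p t = u (N:ℤ) n p t
          ∧ u m ((N:ℤ) + 1) p t = u m (N:ℤ) p t
          ∧ u m n ((N:ℤ) + 1) t = u m n (N:ℤ) t) :
    ∀ t : ℝ,
      HasDerivAt (totE N c μ J V u)
        (-c ^ 2 * (∑ i ∈ Icc (1:ℤ) (N:ℤ), ∑ j ∈ Icc (1:ℤ) (N:ℤ),
            ((u 1 i j t - u 0 i j t) * ud u 0 i j t
              + (u i 1 j t - u i 0 j t) * ud u i 0 j t
              + (u i j 1 t - u i j 0 t) * ud u i j 0 t))
          - β * ((∑ m ∈ Icc (1:ℤ) (N:ℤ), ∑ n ∈ Icc (1:ℤ) (N:ℤ), ∑ p ∈ Icc (1:ℤ) (N:ℤ),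
                ((ud u m n p t - ud u (m - 1) n p t) ^ 2
                  + (ud u m n p t - ud u m (n - 1) p t) ^ 2
                  + (ud u m n p t - ud u m n (p - 1) t) ^ 2))
              + (∑ i ∈ Icc (1:ℤ) (N:ℤ), ∑ j ∈ Icc (1:ℤ) (N:ℤ),
                ((ud u 1 i j t - ud u 0 i j t) * ud u 0 i j t
                  + (ud u i 1 j t - ud u i 0 j t) * ud u i 0 j t
                  + (ud u i j 1 t - ud u i j 0 t) * ud u i j 0 t)))
          - γ * ∑ m ∈ Icc (1:ℤ) (N:ℤ), ∑ n ∈ Icc (1:ℤ) (N:ℤ), ∑ p ∈ Icc (1:ℤ) (N:ℤ),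
              (ud u m n p t) ^ 2)
        t := by
  intro t
  have hmem {i : ℤ} (hi : i ∈ Icc (1 : ℤ) N) : i ∈ Icc (0 : ℤ) (N + 1) :=
    Icc_subset_Icc zero_le_one (by omega) hi
  have hfar : ∀ i ∈ Icc (1 : ℤ) N, ∀ j ∈ Icc (1 : ℤ) N, u (N + 1) i j = u N i j
      ∧ u i (N + 1) j = u i N j ∧ u i j (N + 1) = u i j N := fun i hi j hj ↦
    ⟨funext fun s ↦ (hneum i i j hi hi hj s).1, funext fun s ↦ (hneum i i j hi hi hj s).2.1,
      funext fun s ↦ (hneum i j j hi hj hj s).2.2⟩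
  have hflux : ∀ l v, faceFlux N N l u v t = 0 :=
    faceFlux_eq_zero fun i hi j hj ↦ by simp [hfar i hi j hj]
  have hflux' : ∀ l v, faceFlux N N l (ud u) v t = 0 :=
    faceFlux_eq_zero fun i hi j hj ↦ by simp [ud, hfar i hi j hj]
  refine (lattice_energy_rate_general (fun _ _ _ _ _ _ ↦ hV.differentiable one_ne_zero _)
    (fun m n p hm hn hp ↦ (hdiff m n p hm hn hp t).1)
    (fun m n p hm hn hp ↦ (hdiff m n p (hmem hm) (hmem hn) (hmem hp) t).2)
    (fun m n p hm hn hp ↦ heq m n p hm hn hp t)).congr_deriv ?_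
  rw [hflux, hflux']
  simp only [faceFlux, dirichletForm, cubeInner, zero_add, ← sq]
  ring

end
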